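/- arXiv:1402.5029 — 3 statements merged into one kernel-verified Lean document; each statement's English description precedes it below -/
import Mathlib

section
/- If a mechanism K on a finite set X is OptQL(π, d, d_Q) — that is, K satisfies d-privacy and QL(K, π, d_Q) ≤ QL(K', π, d_Q) for every mechanism K' satisfying d-privacy — then K is OptPriv(π, d_Q, d_Q, q) for q = QL(K, π, d_Q); that is: (1) QL(K, π, d_Q) ≤ q, and (2) for every mechanism K' with QL(K', π, d_Q) ≤ q, one has AdvError(K', π, d_Q) ≤ AdvError(K, π, d_Q). -/
variable {X : Type*}

/-- A mechanism on a finite set `X`: a row-stochastic matrix. -/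
def IsMechanism [Fintype X] (K : X → X → ℝ) : Prop :=
  (∀ x z, 0 ≤ K x z) ∧ ∀ x, ∑ z, K x z = 1

/-- `K` satisfies `d`-privacy. -/
def DPrivate (d : X → X → ℝ) (K : X → X → ℝ) : Prop :=
  ∀ x x' z, K x z ≤ Real.exp (d x x') * K x' z

/-- A prior distribution on `X`. -/
def IsPrior [Fintype X] (pr : X → ℝ) : Prop :=
  (∀ x, 0 ≤ pr x) ∧ ∑ x, pr x = 1

/-- Quality loss of mechanism `K` under prior `pr` and metric `d`. -/
def QL [Fintype X] (K : X → X → ℝ) (pr : X → ℝ) (d : X → X → ℝ) : ℝ :=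
  ∑ x, ∑ z, pr x * K x z * d x z

/-- Composition (matrix product) of a mechanism with a remapping. -/
def comp [Fintype X] (K H : X → X → ℝ) : X → X → ℝ :=
  fun x x' => ∑ z, K x z * H z x'

/-- Adversary's expected error: infimum of quality loss over all remappings. -/
noncomputable def AdvError [Fintype X] (K : X → X → ℝ) (pr : X → ℝ) (d : X → X → ℝ) : ℝ :=
  sInf {q | ∃ H, IsMechanism H ∧ QL (comp K H) pr d = q}

/-- `K` is d-private with minimal quality loss among d-private mechanisms. -/
def OptQL [Fintype X] (pr : X → ℝ) (d dQ : X → X → ℝ) (K : X → X → ℝ) : Prop :=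
  IsMechanism K ∧ DPrivate d K ∧
    ∀ K', IsMechanism K' → DPrivate d K' → QL K pr dQ ≤ QL K' pr dQ

/-- `K` has quality loss at most `q` and maximal adversary error among such mechanisms. -/
def OptPriv [Fintype X] (pr : X → ℝ) (dA dQ : X → X → ℝ) (q : ℝ) (K : X → X → ℝ) : Prop :=
  QL K pr dQ ≤ q ∧
    ∀ K', IsMechanism K' → QL K' pr dQ ≤ q → AdvError K' pr dA ≤ AdvError K pr dA

/-- A walk in the graph with edge relation `E` from `x` to `x'`. -/
def IsWalk (E : X → X → Prop) (x x' : X) (p : List X) : Prop :=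
  p.head? = some x ∧ p.getLast? = some x' ∧ p.Chain' E

/-- The total weight of a walk. -/
def walkWeight (w : X → X → ℝ) (p : List X) : ℝ :=
  ((p.zip p.tail).map fun e => w e.1 e.2).sum

/-- Shortest-path distance induced by a weighted graph. -/
noncomputable def graphDist (E : X → X → Prop) (w : X → X → ℝ) (x x' : X) : ℝ :=
  sInf {c | ∃ p : List X, IsWalk E x x' p ∧ walkWeight w p = c}

theorem comp_isMechanism [Fintype X] {K H : X → X → ℝ} (hK : IsMechanism K)
    (hH : IsMechanism H) : IsMechanism (comp K H) := by
  refine ⟨fun x z => Finset.sum_nonneg fun y _ => mul_nonneg (hK.1 _ _) (hH.1 _ _), fun x => ?_⟩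
  unfold comp
  rw [Finset.sum_comm]
  simp only [← Finset.mul_sum, hH.2, mul_one, hK.2]

theorem comp_dPrivate [Fintype X] {d K H : X → X → ℝ} (hK : DPrivate d K)
    (hH : IsMechanism H) : DPrivate d (comp K H) := by
  intro x x' z
  unfold comp
  rw [Finset.mul_sum]
  refine Finset.sum_le_sum fun y _ => ?_
  rw [← mul_assoc]
  exact mul_le_mul_of_nonneg_right (hK _ _ _) (hH.1 _ _)

theorem QL_lower [Fintype X] {K : X → X → ℝ} (hK : IsMechanism K) (pr : X → ℝ)
    (d : X → X → ℝ) : ∑ x, ∑ z, -|pr x * d x z| ≤ QL K pr d := by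
  refine Finset.sum_le_sum fun x _ => Finset.sum_le_sum fun z _ => ?_
  have h1 : K x z ≤ 1 := by
    rw [← hK.2 x]
    exact Finset.single_le_sum (fun y _ => hK.1 x y) (Finset.mem_univ z)
  have h0 := hK.1 x z
  have e : pr x * K x z * d x z = K x z * (pr x * d x z) := by ring
  rw [e]
  have := neg_abs_le (pr x * d x z)
  have := abs_nonneg (pr x * d x z)
  nlinarith

open Classical in
theorem id_isMechanism [Fintype X] : IsMechanism (fun x z : X => if x = z then (1:ℝ) else 0) := by
  refine ⟨fun x z => ?_, fun x => by simp⟩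
  dsimp only
  split_ifs <;> norm_num

open Classical in
theorem comp_id_right [Fintype X] (K : X → X → ℝ) :
    comp K (fun x z : X => if x = z then (1:ℝ) else 0) = K := by
  funext x z
  simp [comp]

/-- an OptQL mechanism is OptPriv for `q = QL(K, pr, dQ)`. -/
theorem optQL_implies_optPriv [Fintype X] (pr : X → ℝ) (d dQ : X → X → ℝ)
    (K : X → X → ℝ) (hpr : IsPrior pr) (hopt : OptQL pr d dQ K) :
    OptPriv pr dQ dQ (QL K pr dQ) K := by
  classical
  obtain ⟨hK, hd, hmin⟩ := hopt
  refine ⟨le_rfl, fun K' hK' hq => ?_⟩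
  have h1 : AdvError K' pr dQ ≤ QL K' pr dQ := by
    refine csInf_le ⟨∑ x, ∑ z, -|pr x * dQ x z|, ?_⟩ ⟨_, id_isMechanism, by rw [comp_id_right]⟩
    rintro q ⟨H, hH, rfl⟩
    exact QL_lower (comp_isMechanism hK' hH) pr dQ
  have h2 : QL K pr dQ ≤ AdvError K pr dQ := by
    refine le_csInf ⟨_, _, id_isMechanism, rfl⟩ ?_
    rintro q ⟨H, hH, rfl⟩
    exact hmin _ (comp_isMechanism hK hH) (comp_dPrivate hd hH)
  exact h1.trans (hq.trans h2)
end

section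
/- If a mechanism K on a finite set X is OptQL(π, d, d_Q) — that is, K satisfies d-privacy and QL(K, π, d_Q) ≤ QL(K', π, d_Q) for every mechanism K' satisfying d-privacy — then AdvError(K, π, d_Q) = QL(K, π, d_Q); i.e., the adversary cannot reduce the expected error below the quality loss by any remapping, so the identity remapping is optimal. -/
variable {X : Type*}

/-- for an OptQL mechanism the adversary error equals the quality loss. -/
theorem optQL_advError_eq_QL [Fintype X] (pr : X → ℝ) (d dQ : X → X → ℝ)
    (K : X → X → ℝ) (hpr : IsPrior pr) (hopt : OptQL pr d dQ K) :
    AdvError K pr dQ = QL K pr dQ := by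
  classical
  obtain ⟨hK, hP, hmin⟩ := hopt
  apply IsLeast.csInf_eq
  constructor
  · refine ⟨fun x y => if x = y then 1 else 0, ⟨?_, ?_⟩, ?_⟩
    · intro x z
      dsimp only
      split_ifs <;> norm_num
    · intro x
      simp
    · simp [QL, comp]
  · rintro q ⟨H, hH, rfl⟩
    apply hmin
    · refine ⟨fun x z => Finset.sum_nonneg fun y _ => mul_nonneg (hK.1 x y) (hH.1 y z), ?_⟩
      intro x
      unfold comp
      rw [Finset.sum_comm]
      simp only [← Finset.mul_sum, hH.2, mul_one, hK.2]
    · intro x x' z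
      unfold comp
      rw [Finset.mul_sum]
      refine Finset.sum_le_sum fun y _ => ?_
      rw [← mul_assoc]
      exact mul_le_mul_of_nonneg_right (hP x x' y) (hH.1 y z)
end

section
/- Let G = (X, E) be a weighted graph on a finite set X with nonnegative edge weights w, and let d_G be its induced shortest-path distance. If a mechanism K on X satisfies the privacy constraints on all edges — i.e., K(x)(z) ≤ e^{w(x,x')} · K(x')(z) for all z ∈ X and all edges (x,x') ∈ E — then K satisfies d_G-privacy: K(x)(z) ≤ e^{d_G(x,x')} · K(x')(z) for all x, x', z ∈ X joined by a path in G. -/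
variable {X : Type*}

theorem walk_privacy_aux (E : X → X → Prop) (w : X → X → ℝ) (K : X → X → ℝ)
    (hedge : ∀ x x' z, E x x' → K x z ≤ Real.exp (w x x') * K x' z) (z x' : X) :
    ∀ (p : List X) (x : X), IsWalk E x x' p →
      K x z ≤ Real.exp (walkWeight w p) * K x' z := by
  intro p
  induction p with
  | nil => intro x h; simp [IsWalk] at h
  | cons a t ih =>
    intro x h
    obtain ⟨h1, h2, h3⟩ := h
    simp only [List.head?_cons, Option.some.injEq] at h1
    subst h1
    cases t with
    | nil =>
      simp only [List.getLast?_singleton, Option.some.injEq] at h2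
      subst h2
      simp [walkWeight]
    | cons b t =>
      have h4 := List.isChain_cons_cons.mp h3
      have h5 := ih b ⟨rfl, by simpa [List.getLast?_cons_cons] using h2, h4.2⟩
      have h6 : walkWeight w (a :: b :: t) = w a b + walkWeight w (b :: t) := by
        simp [walkWeight]
      rw [h6, Real.exp_add, mul_assoc]
      exact (hedge a b z h4.1).trans (mul_le_mul_of_nonneg_left h5 (Real.exp_pos _).le)

/-- privacy constraints on the edges of a weighted graph imply
d_G-privacy for all pairs joined by a path. -/
theorem edge_constraints_imply_graphDist_privacy [Fintype X]
    (E : X → X → Prop) (hsymE : ∀ x x', E x x' → E x' x)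
    (w : X → X → ℝ) (hw : ∀ x x', 0 ≤ w x x')
    (K : X → X → ℝ) (hK : IsMechanism K)
    (hedge : ∀ x x' z, E x x' → K x z ≤ Real.exp (w x x') * K x' z) :
    ∀ x x' z : X, (∃ p : List X, IsWalk E x x' p) →
      K x z ≤ Real.exp (graphDist E w x x') * K x' z := by
  intro x x' z ⟨p, hp⟩
  have hcl : IsClosed {c : ℝ | K x z ≤ Real.exp c * K x' z} :=
    isClosed_le continuous_const (Real.continuous_exp.mul continuous_const)
  have hbdd : BddBelow {c | ∃ p : List X, IsWalk E x x' p ∧ walkWeight w p = c} := by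
    refine ⟨0, ?_⟩
    rintro c ⟨q, -, rfl⟩
    apply List.sum_nonneg
    intro r hr
    obtain ⟨e, -, rfl⟩ := List.mem_map.mp hr
    exact hw _ _
  have hne : {c | ∃ p : List X, IsWalk E x x' p ∧ walkWeight w p = c}.Nonempty :=
    ⟨_, p, hp, rfl⟩
  have hmem := csInf_mem_closure hne hbdd
  refine closure_minimal ?_ hcl hmem
  rintro c ⟨q, hq, rfl⟩
  exact walk_privacy_aux E w K hedge z x' q x hq
end
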